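/- Fix a real number d' > 0, a real number b, and a real number w > 0. Let v = (r, c, s) and v' = (r', c', s') be vectors in ℝ³ with s ≠ 0 and s' ≠ 0. Then the complex numbers Z_{(b,w)}(v) and Z_{(b,w)}(v') are linearly dependent over ℝ (i.e. Im(Z_{(b,w)}(v) · conj(Z_{(b,w)}(v'))) = 0) if and only if the three points k(b, w), Pr(v) = (c/s, r/s), and Pr(v') = (c'/s', r'/s') in ℝ² are collinear. (Computational core of Lemma 2.6: two semistable objects have the same phase at σ_{(b,w)} exactly when k(b,w), Pr(v(E)), Pr(v(E')) are collinear; in particular walls of stability are line segments through the projection of the Mukai vector.) -/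

import Mathlib

/-!
If `d'` and `w` are nonzero, the central charge `Z_{(b,w)} : ℝ³ → ℂ ≅ ℝ²` has one-dimensional
kernel, spanned by `κ = (1, b, d' (b² + w²))`, and `k(b,w) = Pr κ`. The alternating form
`Im (Z v * conj (Z v'))` vanishes when an argument is `κ`, so it is a constant multiple of
`det (κ, v, v')`. On the other hand, three points of an affine chart of the projective plane are
collinear exactly when their homogeneous coordinate vectors are linearly dependent.
-/

theorem affineIndependent_iff_linearIndependent_prodMk_one {R V ι : Type*} [Ring R]
    [AddCommGroup V] [Module R V] {p : ι → V} :
    AffineIndependent R p ↔ LinearIndependent R fun i ↦ (p i, (1 : R)) := by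
  rw [affineIndependent_iff, linearIndependent_iff']
  refine forall₂_congr fun s a ↦ ?_
  have sum_eq_zero_iff : ∑ i ∈ s, a i • (p i, (1 : R)) = 0 ↔
      ∑ i ∈ s, a i • p i = 0 ∧ ∑ i ∈ s, a i = 0 := by
    simp [Prod.ext_iff, Prod.fst_sum, Prod.snd_sum]
  rw [sum_eq_zero_iff, and_comm, and_imp]

theorem affineIndependent_inv_snd_smul_fst_iff {K V ι : Type*} [DivisionRing K]
    [AddCommGroup V] [Module K V] {v : ι → V × K} (hv : ∀ i, (v i).2 ≠ 0) :
    AffineIndependent K (fun i ↦ (v i).2⁻¹ • (v i).1) ↔ LinearIndependent K v := by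
  have normalize : (fun i ↦ ((v i).2⁻¹ • (v i).1, (1 : K))) =
      (fun i ↦ (Units.mk0 (v i).2 (hv i))⁻¹) • v := by
    ext i <;> simp [Units.smul_def, hv i]
  rw [affineIndependent_iff_linearIndependent_prodMk_one, normalize,
    LinearIndependent.units_smul_iff]

/-- The projection `Pr (r, c, s) = (c / s, r / s)` of homogeneous coordinates to the affine chart
`s ≠ 0`, with the paper's order of the two affine coordinates. -/
def affineProj {K : Type*} [Field K] (v : Fin 3 → K) : K × K :=
  (v 1 / v 2, v 0 / v 2)

theorem collinear_affineProj_iff_det_eq_zero {K : Type*} [Field K] {u v w : Fin 3 → K}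
    (hu : u 2 ≠ 0) (hv : v 2 ≠ 0) (hw : w 2 ≠ 0) :
    Collinear K {affineProj u, affineProj v, affineProj w} ↔
      (Matrix.of ![u, v, w]).det = 0 := by
  let e : (Fin 3 → K) →ₗ[K] (K × K) × K :=
    ((LinearMap.proj 1).prod (LinearMap.proj 0)).prod (LinearMap.proj 2)
  have ker_e : LinearMap.ker e = ⊥ := by
    refine LinearMap.ker_eq_bot'.2 fun x hx ↦ ?_
    obtain ⟨⟨h₁, h₀⟩, h₂⟩ : (x 1 = 0 ∧ x 0 = 0) ∧ x 2 = 0 := by simpa [e] using hx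
    ext i
    fin_cases i
    exacts [h₀, h₁, h₂]
  have affineProj_eq : ![affineProj u, affineProj v, affineProj w] =
      fun i ↦ (e (![u, v, w] i)).2⁻¹ • (e (![u, v, w] i)).1 := by
    ext i <;> fin_cases i <;> simp [e, affineProj, div_eq_inv_mul]
  have snd_ne_zero : ∀ i, (e (![u, v, w] i)).2 ≠ 0 := by
    simp [Fin.forall_fin_succ, e, hu, hv, hw]
  have independent_iff_det : LinearIndependent K ![u, v, w] ↔ (Matrix.of ![u, v, w]).det ≠ 0 := by
    rw [← isUnit_iff_ne_zero, ← Matrix.isUnit_iff_isUnit_det,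
      ← Matrix.linearIndependent_rows_iff_isUnit]
    rfl
  rw [collinear_iff_not_affineIndependent_set, affineProj_eq,
    affineIndependent_inv_snd_smul_fst_iff snd_ne_zero, ← not_ne_iff, not_congr]
  exact (e.linearIndependent_iff ker_e).trans independent_iff_det

/-- The central charge `Z_{(b,w)}` of a polarized K3 surface with `d = H² / 2`, on the normalized
Mukai vector `v = (r, c, s)`. -/
noncomputable def centralCharge (d b w : ℝ) (v : Fin 3 → ℝ) : ℂ :=
  ((2 * d * b * v 1 - v 2 - d * v 0 * (b ^ 2 - w ^ 2) : ℝ) : ℂ) +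
    ((2 * d * w * (v 1 - v 0 * b) : ℝ) : ℂ) * Complex.I

/-- The vector spanning the kernel of `centralCharge d b w` when `d` and `w` are nonzero; its
projection is the point `k(b,w)`. -/
def kernelVector (d b w : ℝ) : Fin 3 → ℝ :=
  ![1, b, d * (b ^ 2 + w ^ 2)]

theorem re_centralCharge (d b w : ℝ) (v : Fin 3 → ℝ) :
    (centralCharge d b w v).re = 2 * d * b * v 1 - v 2 - d * v 0 * (b ^ 2 - w ^ 2) := by
  rw [centralCharge, ← Complex.mk_eq_add_mul_I]

theorem im_centralCharge (d b w : ℝ) (v : Fin 3 → ℝ) :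
    (centralCharge d b w v).im = 2 * d * w * (v 1 - v 0 * b) := by
  rw [centralCharge, ← Complex.mk_eq_add_mul_I]

theorem im_centralCharge_mul_conj (d b w : ℝ) (v v' : Fin 3 → ℝ) :
    (centralCharge d b w v * starRingEnd ℂ (centralCharge d b w v')).im =
      -(2 * d * w) * (Matrix.of ![kernelVector d b w, v, v']).det := by
  simp only [Complex.mul_im, Complex.conj_re, Complex.conj_im, re_centralCharge,
    im_centralCharge, kernelVector, Matrix.det_fin_three, Matrix.of_apply, Matrix.cons_val]
  ring

/-- Computational core of Lemma 2.6: the central charges `Z_{(b,w)}(v)` and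
`Z_{(b,w)}(v')` of two vectors `v = (r,c,s)`, `v' = (r',c',s')` are linearly dependent
over `ℝ` (i.e. `Im(Z(v)·conj(Z(v'))) = 0`) if and only if the three points `k(b,w)`,
`Pr(v) = (c/s, r/s)` and `Pr(v') = (c'/s', r'/s')` are collinear. -/
theorem stmt5 (d' b w : ℝ) (hd' : 0 < d') (hw : 0 < w)
    (r c s r' c' s' : ℝ) (hs : s ≠ 0) (hs' : s' ≠ 0) :
    ((((2 * d' * b * c - s - d' * r * (b ^ 2 - w ^ 2) : ℝ) : ℂ) +
        ((2 * d' * w * (c - r * b) : ℝ) : ℂ) * Complex.I) *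
      (starRingEnd ℂ)
        (((2 * d' * b * c' - s' - d' * r' * (b ^ 2 - w ^ 2) : ℝ) : ℂ) +
          ((2 * d' * w * (c' - r' * b) : ℝ) : ℂ) * Complex.I)).im = 0 ↔
    Collinear ℝ
      ({(b / (d' * (b ^ 2 + w ^ 2)), 1 / (d' * (b ^ 2 + w ^ 2))),
        (c / s, r / s), (c' / s', r' / s')} : Set (ℝ × ℝ)) := by
  have hN : d' * (b ^ 2 + w ^ 2) ≠ 0 := by positivity
  have hdw : -(2 * d' * w) ≠ 0 := neg_ne_zero.2 (by positivity)
  change (centralCharge d' b w ![r, c, s] *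
      starRingEnd ℂ (centralCharge d' b w ![r', c', s'])).im = 0 ↔
    Collinear ℝ {affineProj (kernelVector d' b w), affineProj ![r, c, s], affineProj ![r', c', s']}
  rw [im_centralCharge_mul_conj, mul_eq_zero_iff_left hdw,
    collinear_affineProj_iff_det_eq_zero hN hs hs']
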